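/- arXiv:2509.14845 — 2 statements merged into one kernel-verified Lean document; each statement's English description precedes it below -/
import Mathlib

section
/- Let d ≥ 2 and γ ∈ ℝ with -d < γ. Define the matrix a(z) = |z|^{γ+2}(Id - ẑ⊗ẑ) for z ∈ ℝᵈ\{0\}, where ẑ = z/|z|, and let A(v) = ∫_{ℝᵈ} a(v-w) μ(w) dw where μ(w) = (2π)^{-d/2} exp(-|w|²/2). Then for v = r·e_d with r > 0, A(r e_d) is a diagonal matrix whose off-diagonal entries vanish, whose first d-1 diagonal entries are all equal and comparable to ⟨r⟩^{γ+2}, and whose last diagonal entry is comparable to ⟨r⟩^γ. -/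
/-!
On the diagonal, `a(z)ᵢᵢ = |z|^γ ∑_{j ≠ i} zⱼ²`. Write `s = ∑_{j ≠ i} vⱼ²` for the squared distance
of `v` to the `i`-th axis. Then `A(v)ᵢᵢ` is comparable to `⟨v⟩^γ (1 + s)` for *every* `v`, and the
two regimes of the theorem are `s = 0` and `s = |v|²`.

Upper bound: `∑_{j ≠ i} (v - w)ⱼ² ≤ 2 (1 + s) ⟨w⟩²`, while Peetre's inequality moves `⟨v⟩^γ` out of
the convolution of the locally integrable `|z|^γ` with the rapidly decaying `⟨w⟩² μ(w)`.
Lower bound: let `p` be the corner of the cube `[-2, 2]^d` in the orthant opposite to `v`. In the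
unit ball around `p`, every coordinate satisfies `(v - w)ⱼ² ≥ vⱼ² + 1`, `|v - w|` is comparable to
`⟨v⟩`, and `μ` is bounded below.

The matrix is diagonal because a sign change of one coordinate maps `a(z)ᵢⱼ` to `-a(z)ᵢⱼ`, and its
diagonal entries are matched by a transposition of coordinates; both preserve `μ`.
-/

open MeasureTheory Real Set

/-- The standard Maxwellian (Gaussian) on `ℝᵈ`. -/
noncomputable def stdGaussian (d : ℕ) (w : EuclideanSpace ℝ (Fin d)) : ℝ :=
  (2 * Real.pi) ^ (-(d : ℝ) / 2) * Real.exp (-‖w‖ ^ 2 / 2)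

/-- The Landau diffusion matrix `A(v) = ∫ |v-w|^{γ+2}(Id - ẑ⊗ẑ)|_{z=v-w} μ(w) dw`. -/
noncomputable def landauA (d : ℕ) (γ : ℝ) (v : EuclideanSpace ℝ (Fin d)) :
    Matrix (Fin d) (Fin d) ℝ :=
  Matrix.of fun i j => ∫ w : EuclideanSpace ℝ (Fin d),
    ‖v - w‖ ^ (γ + 2) *
      ((if i = j then (1:ℝ) else 0) - (v - w) i * (v - w) j / ‖v - w‖ ^ 2) *
      stdGaussian d w

section JapaneseBracket

lemma rpow_le_rpow_abs_mul_rpow {a b K : ℝ} (s : ℝ) (ha : 0 < a) (hb : 0 < b) (hab : a ≤ K * b)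
    (hba : b ≤ K * a) : a ^ s ≤ K ^ |s| * b ^ s := by
  have hK : 0 < K := pos_of_mul_pos_left (ha.trans_le hab) hb.le
  rcases le_total 0 s with hs | hs
  · rw [abs_of_nonneg hs, ← mul_rpow hK.le hb.le]
    exact rpow_le_rpow ha.le hab hs
  · rw [abs_of_nonpos hs, rpow_neg hK.le, ← inv_rpow hK.le, ← mul_rpow (by positivity) hb.le]
    exact rpow_le_rpow_of_nonpos (by positivity) ((inv_mul_le_iff₀ hK).2 hba) hs

variable {E : Type*} [SeminormedAddCommGroup E]

/-- The Japanese bracket `⟨x⟩ = (1 + |x|²)^{1/2}`. -/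
noncomputable def japaneseBracket (x : E) : ℝ := √(1 + ‖x‖ ^ 2)

lemma japaneseBracket_sq (x : E) : japaneseBracket x ^ 2 = 1 + ‖x‖ ^ 2 :=
  sq_sqrt (by positivity)

lemma one_le_japaneseBracket (x : E) : 1 ≤ japaneseBracket x :=
  one_le_sqrt.2 (le_add_of_nonneg_right (sq_nonneg _))

lemma japaneseBracket_pos (x : E) : 0 < japaneseBracket x :=
  one_pos.trans_le (one_le_japaneseBracket x)

lemma norm_le_japaneseBracket (x : E) : ‖x‖ ≤ japaneseBracket x :=
  le_sqrt_of_sq_le (le_add_of_nonneg_left zero_le_one)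

lemma japaneseBracket_add_le (x y : E) :
    japaneseBracket (x + y) ≤ √2 * japaneseBracket y * japaneseBracket x := by
  have hxy : ‖x + y‖ ^ 2 ≤ (‖x‖ + ‖y‖) ^ 2 := by gcongr; exact norm_add_le x y
  rw [japaneseBracket, japaneseBracket, japaneseBracket, ← sqrt_mul (by positivity),
    ← sqrt_mul (by positivity)]
  gcongr
  nlinarith [sq_nonneg (‖x‖ - ‖y‖), mul_nonneg (sq_nonneg ‖x‖) (sq_nonneg ‖y‖)]

/-- Peetre's inequality. -/
lemma japaneseBracket_sub_rpow_le (v w : E) (s : ℝ) :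
    japaneseBracket (v - w) ^ s ≤ (√2 * japaneseBracket w) ^ |s| * japaneseBracket v ^ s := by
  refine rpow_le_rpow_abs_mul_rpow s (japaneseBracket_pos _) (japaneseBracket_pos _) ?_ ?_
  · simpa [sub_eq_add_neg, japaneseBracket] using japaneseBracket_add_le v (-w)
  · simpa using japaneseBracket_add_le (v - w) w

lemma norm_rpow_le_japaneseBracket_rpow (z : E) (s : ℝ) :
    ‖z‖ ^ s ≤
      √2 ^ |s| * japaneseBracket z ^ s * (1 + (Metric.ball 0 1).indicator (‖·‖ ^ s) z) := by
  have hbracket := japaneseBracket_pos z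
  by_cases hz : z ∈ Metric.ball 0 1
  · have hz' : ‖z‖ < 1 := mem_ball_zero_iff.1 hz
    have hone : 1 ≤ √2 ^ |s| * japaneseBracket z ^ s := by
      rw [← one_rpow s]
      refine rpow_le_rpow_abs_mul_rpow s one_pos hbracket ?_ ?_
      · exact one_le_mul_of_one_le_of_one_le (one_le_sqrt.2 one_le_two) (one_le_japaneseBracket z)
      · rw [mul_one]
        exact sqrt_le_sqrt (by nlinarith [norm_nonneg z])
    rw [indicator_of_mem hz]
    refine (le_mul_of_one_le_left (by positivity) hone).trans ?_
    gcongr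
    exact le_add_of_nonneg_left zero_le_one
  · have hz' : 1 ≤ ‖z‖ := by simpa using hz
    rw [indicator_of_notMem hz, add_zero, mul_one]
    refine rpow_le_rpow_abs_mul_rpow s (by positivity) hbracket ?_ ?_
    · exact (norm_le_japaneseBracket z).trans
        (le_mul_of_one_le_left hbracket.le (one_le_sqrt.2 one_le_two))
    · rw [japaneseBracket, ← sqrt_sq (norm_nonneg z), ← sqrt_mul (by positivity),
        sqrt_sq (norm_nonneg z)]
      exact sqrt_le_sqrt (by nlinarith)

end JapaneseBracket

section Convolution

variable {E : Type*} [NormedAddCommGroup E]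

lemma norm_sub_rpow_mul_le {s M : ℝ} {g : E → ℝ} (hg : ∀ w, 0 ≤ g w)
    (hM : ∀ w, japaneseBracket w ^ |s| * g w ≤ M) (v w : E) :
    ‖v - w‖ ^ s * g w ≤ √2 ^ |s| * √2 ^ |s| * japaneseBracket v ^ s *
      (japaneseBracket w ^ |s| * g w +
        M * (Metric.ball 0 1).indicator (‖·‖ ^ s) (v - w)) := by
  have hv := japaneseBracket_pos v
  have hw := japaneseBracket_pos w
  have hgw := hg w
  set χ := (Metric.ball 0 1).indicator (‖·‖ ^ s) (v - w)
  have hχ : 0 ≤ χ := indicator_nonneg (fun _ _ => by positivity) _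
  calc ‖v - w‖ ^ s * g w
      ≤ √2 ^ |s| * japaneseBracket (v - w) ^ s * (1 + χ) * g w := by
        gcongr; exact norm_rpow_le_japaneseBracket_rpow _ s
    _ ≤ √2 ^ |s| * ((√2 * japaneseBracket w) ^ |s| * japaneseBracket v ^ s) * (1 + χ) * g w := by
        gcongr; exact japaneseBracket_sub_rpow_le v w s
    _ = √2 ^ |s| * √2 ^ |s| * japaneseBracket v ^ s *
          (japaneseBracket w ^ |s| * g w + japaneseBracket w ^ |s| * g w * χ) := by
        rw [mul_rpow (sqrt_nonneg 2) hw.le]; ring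
    _ ≤ _ := by gcongr; exact hM w

variable [NormedSpace ℝ E] [FiniteDimensional ℝ E] [Nontrivial E] [MeasurableSpace E]
  [BorelSpace E] {μ : Measure E} [μ.IsAddHaarMeasure]

lemma integrable_indicator_ball_norm_rpow {s : ℝ} (hs : -(Module.finrank ℝ E : ℝ) < s) :
    Integrable ((Metric.ball 0 1).indicator fun x : E => ‖x‖ ^ s) μ := by
  refine IntegrableOn.integrable_indicator ?_ measurableSet_ball
  refine integrableOn_ball_of_norm_le_rpow (C := 1) (α := -s) Module.finrank_pos (by linarith) ?_
    (measurable_norm.pow_const s).aestronglyMeasurable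
  refine .of_forall fun x => ?_
  rw [norm_of_nonneg (by positivity), neg_neg, one_mul]

theorem exists_integral_norm_sub_rpow_mul_le {s M : ℝ} (hs : -(Module.finrank ℝ E : ℝ) < s)
    {g : E → ℝ} (hg : ∀ w, 0 ≤ g w) (hgm : Measurable g)
    (hint : Integrable (fun w => japaneseBracket w ^ |s| * g w) μ)
    (hM : ∀ w, japaneseBracket w ^ |s| * g w ≤ M) :
    ∃ C, 0 < C ∧ ∀ v, Integrable (fun w => ‖v - w‖ ^ s * g w) μ ∧
      ∫ w, ‖v - w‖ ^ s * g w ∂μ ≤ C * japaneseBracket v ^ s := by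
  set χ : E → ℝ := (Metric.ball 0 1).indicator (‖·‖ ^ s)
  have hχ : Integrable χ μ := integrable_indicator_ball_norm_rpow hs
  set B := ∫ w, japaneseBracket w ^ |s| * g w ∂μ + M * ∫ w, χ w ∂μ
  refine ⟨√2 ^ |s| * √2 ^ |s| * (|B| + 1), by positivity, fun v => ?_⟩
  have hχv : Integrable (fun w => M * χ (v - w)) μ := (hχ.comp_sub_left v).const_mul M
  have hmajorant := (hint.add hχv).const_mul (√2 ^ |s| * √2 ^ |s| * japaneseBracket v ^ s)
  have hnonneg (w : E) : 0 ≤ ‖v - w‖ ^ s * g w := mul_nonneg (by positivity) (hg w)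
  have hle := norm_sub_rpow_mul_le hg hM v
  have hintegrable : Integrable (fun w => ‖v - w‖ ^ s * g w) μ :=
    hmajorant.mono' (by fun_prop) (.of_forall fun w => by
      rw [norm_of_nonneg (hnonneg w)]; exact hle w)
  refine ⟨hintegrable, ?_⟩
  have hv := japaneseBracket_pos v
  calc ∫ w, ‖v - w‖ ^ s * g w ∂μ
      ≤ √2 ^ |s| * √2 ^ |s| * japaneseBracket v ^ s * B := by
        refine (integral_mono hintegrable hmajorant hle).trans_eq ?_
        simp only [Pi.add_apply]
        rw [integral_const_mul, integral_add hint hχv, integral_const_mul,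
          integral_sub_left_eq_self χ μ v]
    _ ≤ √2 ^ |s| * √2 ^ |s| * japaneseBracket v ^ s * (|B| + 1) := by
        gcongr; exact (le_abs_self B).trans (by linarith)
    _ = _ := by ring

end Convolution

section Gaussian

variable {n : ℕ}

lemma stdGaussian_pos (w : EuclideanSpace ℝ (Fin n)) : 0 < stdGaussian n w := by
  unfold stdGaussian; positivity

lemma measurable_stdGaussian : Measurable (stdGaussian n) := by
  unfold stdGaussian; fun_prop

lemma stdGaussian_anti {v w : EuclideanSpace ℝ (Fin n)} (h : ‖v‖ ≤ ‖w‖) :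
    stdGaussian n w ≤ stdGaussian n v := by
  unfold stdGaussian; gcongr

lemma stdGaussian_map (L : EuclideanSpace ℝ (Fin n) ≃ₗᵢ[ℝ] EuclideanSpace ℝ (Fin n))
    (w : EuclideanSpace ℝ (Fin n)) : stdGaussian n (L w) = stdGaussian n w := by
  simp only [stdGaussian, L.norm_map]

lemma integrable_exp_neg_mul_norm_sq {V : Type*} [NormedAddCommGroup V] [InnerProductSpace ℝ V]
    [FiniteDimensional ℝ V] [MeasurableSpace V] [BorelSpace V] {b : ℝ} (hb : 0 < b) :
    Integrable fun v : V => exp (-b * ‖v‖ ^ 2) :=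
  .of_integral_ne_zero (by rw [GaussianFourier.integral_rexp_neg_mul_sq_norm hb]; positivity)

lemma exists_japaneseBracket_rpow_mul_stdGaussian_le (n : ℕ) {p : ℝ} (hp : 0 ≤ p) :
    ∃ C, 0 < C ∧ ∀ w : EuclideanSpace ℝ (Fin n),
      japaneseBracket w ^ p * stdGaussian n w ≤ C * exp (-(1 / 4) * ‖w‖ ^ 2) := by
  set G : ℝ := (2 * π) ^ (-(n : ℝ) / 2)
  refine ⟨((p / 2) / (1 / 4)) ^ (p / 2) * exp (1 / 4) * G + 1, by positivity, fun w => ?_⟩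
  have hbracket : japaneseBracket w ^ p ≤
      ((p / 2) / (1 / 4)) ^ (p / 2) * exp (1 / 4 * (1 + ‖w‖ ^ 2)) := by
    have hpow : japaneseBracket w ^ p = |1 + ‖w‖ ^ 2| ^ (p / 2) := by
      rw [abs_of_pos (by positivity), japaneseBracket, sqrt_eq_rpow, ← rpow_mul (by positivity)]
      ring_nf
    have h := ProbabilityTheory.rpow_abs_le_mul_exp_abs (1 + ‖w‖ ^ 2) (t := 1 / 4)
      (div_nonneg hp zero_le_two) (by norm_num)
    rwa [← hpow, abs_of_pos (by norm_num), abs_of_pos (by positivity)] at h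
  calc japaneseBracket w ^ p * stdGaussian n w
      ≤ ((p / 2) / (1 / 4)) ^ (p / 2) * exp (1 / 4 * (1 + ‖w‖ ^ 2)) *
          (G * exp (-‖w‖ ^ 2 / 2)) := by
        rw [stdGaussian]; gcongr
    _ = ((p / 2) / (1 / 4)) ^ (p / 2) * exp (1 / 4) * G * exp (-(1 / 4) * ‖w‖ ^ 2) := by
        have hexp : exp (1 / 4 * (1 + ‖w‖ ^ 2)) * exp (-‖w‖ ^ 2 / 2) =
            exp (1 / 4) * exp (-(1 / 4) * ‖w‖ ^ 2) := by
          rw [← exp_add, ← exp_add]; ring_nf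
        linear_combination ((p / 2) / (1 / 4)) ^ (p / 2) * G * hexp
    _ ≤ _ := by gcongr; linarith

theorem exists_integral_norm_sub_rpow_mul_stdGaussian_le [NeZero n] {s q : ℝ} (hs : -(n : ℝ) < s)
    (hq : 0 ≤ q) :
    ∃ C, 0 < C ∧ ∀ v : EuclideanSpace ℝ (Fin n),
      Integrable (fun w => ‖v - w‖ ^ s * (japaneseBracket w ^ q * stdGaussian n w)) ∧
      ∫ w, ‖v - w‖ ^ s * (japaneseBracket w ^ q * stdGaussian n w) ≤
        C * japaneseBracket v ^ s := by
  obtain ⟨M, hM, hle⟩ :=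
    exists_japaneseBracket_rpow_mul_stdGaussian_le n (add_nonneg (abs_nonneg s) hq)
  simp only [rpow_add (japaneseBracket_pos _), mul_assoc] at hle
  have hnonneg (w : EuclideanSpace ℝ (Fin n)) (p : ℝ) : 0 ≤ japaneseBracket w ^ p :=
    rpow_nonneg (japaneseBracket_pos w).le p
  have hg (w : EuclideanSpace ℝ (Fin n)) : 0 ≤ japaneseBracket w ^ q * stdGaussian n w :=
    mul_nonneg (hnonneg w q) (stdGaussian_pos w).le
  have hgm : Measurable fun w => japaneseBracket w ^ q * stdGaussian n w := by
    have := measurable_stdGaussian (n := n)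
    unfold japaneseBracket
    fun_prop
  have hbracket : Measurable fun w : EuclideanSpace ℝ (Fin n) => japaneseBracket w ^ |s| := by
    unfold japaneseBracket; fun_prop
  refine exists_integral_norm_sub_rpow_mul_le (M := M) (by simpa using hs) hg hgm ?_ fun w => ?_
  · refine ((integrable_exp_neg_mul_norm_sq (b := 1 / 4) (by norm_num)).const_mul M).mono'
      (hbracket.mul hgm).aestronglyMeasurable (.of_forall fun w => ?_)
    rw [norm_of_nonneg (mul_nonneg (hnonneg w _) (hg w))]
    exact hle w
  · refine (hle w).trans (mul_le_of_le_one_right hM.le (exp_le_one_iff.2 ?_))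
    nlinarith [sq_nonneg ‖w‖]

end Gaussian

section OffAxis

variable {ι : Type*} [Fintype ι]

lemma japaneseBracket_le_norm [Nonempty ι] {v z : EuclideanSpace ℝ ι}
    (h : ∀ j, v j ^ 2 + 1 ≤ z j ^ 2) : japaneseBracket v ≤ ‖z‖ := by
  have hcard : (1 : ℝ) ≤ Fintype.card ι := mod_cast Fintype.card_pos
  refine (sq_le_sq₀ (japaneseBracket_pos v).le (norm_nonneg z)).1 ?_
  calc japaneseBracket v ^ 2 ≤ ∑ j, (v j ^ 2 + 1) := by
        rw [japaneseBracket_sq, EuclideanSpace.real_norm_sq_eq, Finset.sum_add_distrib,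
          Finset.sum_const, nsmul_one, Finset.card_univ, add_comm]
        gcongr
    _ ≤ ‖z‖ ^ 2 := by
        rw [EuclideanSpace.real_norm_sq_eq]; exact Finset.sum_le_sum fun j _ => h j

variable [DecidableEq ι]

/-- The squared distance from `z` to the `i`-th coordinate axis. -/
def offAxisSq (i : ι) (z : EuclideanSpace ℝ ι) : ℝ := ∑ j ∈ Finset.univ.erase i, z j ^ 2

lemma offAxisSq_nonneg (i : ι) (z : EuclideanSpace ℝ ι) : 0 ≤ offAxisSq i z :=
  Finset.sum_nonneg fun _ _ => sq_nonneg _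

lemma offAxisSq_eq_norm_sq_sub (i : ι) (z : EuclideanSpace ℝ ι) :
    offAxisSq i z = ‖z‖ ^ 2 - z i ^ 2 := by
  rw [offAxisSq, Finset.sum_erase_eq_sub (Finset.mem_univ i), EuclideanSpace.real_norm_sq_eq]

lemma one_add_offAxisSq_of_apply_eq_zero {i : ι} {z : EuclideanSpace ℝ ι} (hz : z i = 0) :
    1 + offAxisSq i z = japaneseBracket z ^ 2 := by
  rw [offAxisSq_eq_norm_sq_sub, hz, japaneseBracket_sq, sq (0 : ℝ), zero_mul, sub_zero]

lemma offAxisSq_smul_single (i : ι) (r : ℝ) :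
    offAxisSq i (r • EuclideanSpace.single i 1) = 0 := by
  rw [offAxisSq_eq_norm_sq_sub]
  simp [norm_smul]

lemma offAxisSq_sub_le (i : ι) (v w : EuclideanSpace ℝ ι) :
    offAxisSq i (v - w) ≤ 2 * (1 + offAxisSq i v) * japaneseBracket w ^ 2 := by
  have hparallelogram : offAxisSq i (v - w) ≤ 2 * (offAxisSq i v + offAxisSq i w) := by
    simp only [offAxisSq, ← Finset.sum_add_distrib, Finset.mul_sum, PiLp.sub_apply]
    exact Finset.sum_le_sum fun j _ => by nlinarith [sq_nonneg (v j + w j)]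
  have hw : offAxisSq i w ≤ ‖w‖ ^ 2 := by
    rw [offAxisSq_eq_norm_sq_sub]; exact sub_le_self _ (sq_nonneg _)
  rw [japaneseBracket_sq]
  nlinarith [mul_nonneg (offAxisSq_nonneg i v) (sq_nonneg ‖w‖)]

lemma one_add_offAxisSq_le [Nontrivial ι] {v z : EuclideanSpace ℝ ι}
    (h : ∀ j, v j ^ 2 + 1 ≤ z j ^ 2) (i : ι) : 1 + offAxisSq i v ≤ offAxisSq i z := by
  obtain ⟨k, hk⟩ := exists_ne i
  have hcard : (1 : ℝ) ≤ (Finset.univ.erase i).card :=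
    mod_cast Finset.card_pos.2 ⟨k, Finset.mem_erase.2 ⟨hk, Finset.mem_univ k⟩⟩
  calc 1 + offAxisSq i v ≤ ∑ j ∈ Finset.univ.erase i, (v j ^ 2 + 1) := by
        rw [Finset.sum_add_distrib, Finset.sum_const, nsmul_one, add_comm, offAxisSq]; gcongr
    _ ≤ offAxisSq i z := Finset.sum_le_sum fun j _ => h j

end OffAxis

section OppositeCorner

variable {ι : Type*}

/-- The corner of the cube `[-2, 2]^ι` in the orthant opposite to that of `v`; for `w` near it,
`v - w` stays away from all coordinate hyperplanes. -/
noncomputable def oppositeCorner (v : EuclideanSpace ℝ ι) : EuclideanSpace ℝ ι :=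
  WithLp.toLp 2 fun j => if 0 ≤ v j then -2 else 2

variable [Fintype ι]

lemma norm_oppositeCorner (v : EuclideanSpace ℝ ι) :
    ‖oppositeCorner v‖ = √(4 * Fintype.card ι) := by
  have hsq (j : ι) : oppositeCorner v j ^ 2 = 4 := by
    simp only [oppositeCorner]; split_ifs <;> norm_num
  rw [EuclideanSpace.norm_eq]
  simp only [norm_eq_abs, sq_abs, hsq, Finset.sum_const, Finset.card_univ, nsmul_eq_mul, mul_comm]

lemma sq_add_one_le_sq_sub_apply {v w : EuclideanSpace ℝ ι}
    (hw : w ∈ Metric.ball (oppositeCorner v) 1) (j : ι) : v j ^ 2 + 1 ≤ (v - w) j ^ 2 := by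
  have hdist : |w j - oppositeCorner v j| ≤ 1 :=
    (PiLp.norm_apply_le (w - oppositeCorner v) j).trans (mem_ball_iff_norm.1 hw).le
  obtain ⟨hlower, hupper⟩ := abs_le.1 hdist
  rw [PiLp.sub_apply]
  simp only [oppositeCorner] at hlower hupper
  split_ifs at hlower hupper with hv <;> nlinarith

lemma norm_le_of_mem_ball_oppositeCorner {v w : EuclideanSpace ℝ ι}
    (hw : w ∈ Metric.ball (oppositeCorner v) 1) : ‖w‖ ≤ √(4 * Fintype.card ι) + 1 := by
  rw [← norm_oppositeCorner v]
  linarith [norm_le_norm_add_norm_sub' w (oppositeCorner v), mem_ball_iff_norm.1 hw]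

lemma japaneseBracket_rpow_le_of_mem_ball_oppositeCorner [Nonempty ι] {v w : EuclideanSpace ℝ ι}
    (hw : w ∈ Metric.ball (oppositeCorner v) 1) (s : ℝ) :
    japaneseBracket v ^ s ≤ (√(4 * Fintype.card ι) + 2) ^ |s| * ‖v - w‖ ^ s := by
  have hlower : japaneseBracket v ≤ ‖v - w‖ :=
    japaneseBracket_le_norm (sq_add_one_le_sq_sub_apply hw)
  have hv := japaneseBracket_pos v
  have hnonneg := sqrt_nonneg (4 * Fintype.card ι : ℝ)
  refine rpow_le_rpow_abs_mul_rpow s hv (hv.trans_le hlower) ?_ ?_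
  · nlinarith
  · nlinarith [norm_sub_le v w, norm_le_of_mem_ball_oppositeCorner hw, norm_le_japaneseBracket v,
      one_le_japaneseBracket v]

end OppositeCorner

section LandauMatrix

/-- The matrix `a(z) = |z|^{γ+2} (Id - ẑ ⊗ ẑ)`, whose convolution with `stdGaussian`
is `landauA`. -/
noncomputable def landauKernel {ι : Type*} [Fintype ι] [DecidableEq ι] (γ : ℝ)
    (z : EuclideanSpace ℝ ι) : Matrix ι ι ℝ :=
  Matrix.of fun i j => ‖z‖ ^ (γ + 2) * ((if i = j then 1 else 0) - z i * z j / ‖z‖ ^ 2)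

lemma landauKernel_apply_self {ι : Type*} [Fintype ι] [DecidableEq ι] (γ : ℝ)
    {z : EuclideanSpace ℝ ι} (hz : z ≠ 0) (i : ι) :
    landauKernel γ z i i = ‖z‖ ^ γ * offAxisSq i z := by
  have hnorm : 0 < ‖z‖ := norm_pos_iff.2 hz
  rw [landauKernel, Matrix.of_apply, if_pos rfl, offAxisSq_eq_norm_sq_sub, rpow_add hnorm,
    rpow_two]
  field_simp

variable {n : ℕ}

lemma landauA_apply (γ : ℝ) (v : EuclideanSpace ℝ (Fin n)) (i j : Fin n) :
    landauA n γ v i j = ∫ w, landauKernel γ (v - w) i j * stdGaussian n w := rfl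

lemma landauA_apply_self (γ : ℝ) (v : EuclideanSpace ℝ (Fin n)) (i : Fin n) :
    landauA n γ v i i = ∫ w, ‖v - w‖ ^ γ * offAxisSq i (v - w) * stdGaussian n w := by
  have : Nonempty (Fin n) := ⟨i⟩
  rw [landauA_apply]
  refine integral_congr_ae ?_
  filter_upwards [Measure.ae_ne volume v] with w hw
  rw [landauKernel_apply_self γ (sub_ne_zero.2 hw.symm)]

lemma landauA_map_of_landauKernel_map {γ c : ℝ}
    (L : EuclideanSpace ℝ (Fin n) ≃ₗᵢ[ℝ] EuclideanSpace ℝ (Fin n)) {i j k l : Fin n}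
    (h : ∀ z, landauKernel γ (L z) i j = c * landauKernel γ z k l)
    (v : EuclideanSpace ℝ (Fin n)) : landauA n γ (L v) i j = c * landauA n γ v k l := by
  rw [landauA_apply, landauA_apply, ← integral_const_mul,
    ← L.measurePreserving.integral_comp L.toHomeomorph.measurableEmbedding]
  simp only [← map_sub, h, stdGaussian_map, mul_assoc]

lemma landauA_comm (γ : ℝ) (v : EuclideanSpace ℝ (Fin n)) (i j : Fin n) :
    landauA n γ v i j = landauA n γ v j i := by
  simp only [landauA, Matrix.of_apply, eq_comm, mul_comm ((v - _) i)]

lemma landauA_apply_eq_zero (γ : ℝ) {v : EuclideanSpace ℝ (Fin n)} {i j : Fin n} (hij : i ≠ j)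
    (hi : v i = 0) : landauA n γ v i j = 0 := by
  let L : EuclideanSpace ℝ (Fin n) ≃ₗᵢ[ℝ] EuclideanSpace ℝ (Fin n) :=
    LinearIsometryEquiv.piLpCongrRight 2 fun l =>
      if l = i then LinearIsometryEquiv.neg ℝ else LinearIsometryEquiv.refl ℝ ℝ
  have hLi (z) : L z i = -z i := by simp [L]
  have hLne (z) {l} (hl : l ≠ i) : L z l = z l := by simp [L, hl]
  have hLv : L v = v := by
    ext l
    obtain rfl | hl := eq_or_ne l i
    · rw [hLi, hi, neg_zero]
    · exact hLne v hl
  have hkernel (z) : landauKernel γ (L z) i j = -1 * landauKernel γ z i j := by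
    simp only [landauKernel, Matrix.of_apply, L.norm_map, hLi, hLne z hij.symm, if_neg hij]
    ring
  have h := landauA_map_of_landauKernel_map L hkernel v
  rw [hLv] at h
  linarith

lemma landauA_apply_self_eq (γ : ℝ) {v : EuclideanSpace ℝ (Fin n)} {i j : Fin n}
    (hij : v i = v j) : landauA n γ v i i = landauA n γ v j j := by
  let L : EuclideanSpace ℝ (Fin n) ≃ₗᵢ[ℝ] EuclideanSpace ℝ (Fin n) :=
    LinearIsometryEquiv.piLpCongrLeft 2 ℝ ℝ (Equiv.swap i j)
  have hL (z l) : L z l = z (Equiv.swap i j l) := by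
    simp [L, LinearIsometryEquiv.piLpCongrLeft_apply, Equiv.piCongrLeft']
  have hLv : L v = v := by
    ext l
    rw [hL, Equiv.apply_swap_eq_self hij]
  have hkernel (z) : landauKernel γ (L z) i i = 1 * landauKernel γ z j j := by
    simp only [landauKernel, Matrix.of_apply, L.norm_map, hL, Equiv.swap_apply_left, one_mul,
      if_true]
  simpa only [hLv, one_mul] using landauA_map_of_landauKernel_map L hkernel v

end LandauMatrix

section DiagonalBounds

variable {n : ℕ}

lemma norm_sub_rpow_mul_offAxisSq_mul_stdGaussian_nonneg (γ : ℝ) (i : Fin n)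
    (v w : EuclideanSpace ℝ (Fin n)) :
    0 ≤ ‖v - w‖ ^ γ * offAxisSq i (v - w) * stdGaussian n w :=
  mul_nonneg (mul_nonneg (by positivity) (offAxisSq_nonneg _ _)) (stdGaussian_pos w).le

lemma exists_landauA_apply_self_le [NeZero n] {γ : ℝ} (hγ : -(n : ℝ) < γ) :
    ∃ C, 0 < C ∧ ∀ (v : EuclideanSpace ℝ (Fin n)) (i : Fin n),
      Integrable (fun w => ‖v - w‖ ^ γ * offAxisSq i (v - w) * stdGaussian n w) ∧
      landauA n γ v i i ≤ C * (japaneseBracket v ^ γ * (1 + offAxisSq i v)) := by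
  obtain ⟨C, hC, hmoment⟩ := exists_integral_norm_sub_rpow_mul_stdGaussian_le hγ zero_le_two
  refine ⟨2 * C, by positivity, fun v i => ?_⟩
  obtain ⟨hint, hle⟩ := hmoment v
  have hnonneg := norm_sub_rpow_mul_offAxisSq_mul_stdGaussian_nonneg γ i v
  have hpointwise (w : EuclideanSpace ℝ (Fin n)) :
      ‖v - w‖ ^ γ * offAxisSq i (v - w) * stdGaussian n w ≤ 2 * (1 + offAxisSq i v) *
        (‖v - w‖ ^ γ * (japaneseBracket w ^ (2 : ℝ) * stdGaussian n w)) := by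
    have hμ := (stdGaussian_pos w).le
    calc ‖v - w‖ ^ γ * offAxisSq i (v - w) * stdGaussian n w
        ≤ ‖v - w‖ ^ γ * (2 * (1 + offAxisSq i v) * japaneseBracket w ^ 2) * stdGaussian n w := by
          gcongr; exact offAxisSq_sub_le i v w
      _ = _ := by rw [rpow_two]; ring
  have hmeas : Measurable fun w => ‖v - w‖ ^ γ * offAxisSq i (v - w) * stdGaussian n w := by
    have := measurable_stdGaussian (n := n)
    unfold offAxisSq
    fun_prop
  have hintegrable := (hint.const_mul _).mono' hmeas.aestronglyMeasurable (.of_forall fun w => by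
    rw [norm_of_nonneg (hnonneg w)]; exact hpointwise w)
  refine ⟨hintegrable, ?_⟩
  have hs := offAxisSq_nonneg i v
  calc landauA n γ v i i
      ≤ 2 * (1 + offAxisSq i v) *
          ∫ w, ‖v - w‖ ^ γ * (japaneseBracket w ^ (2 : ℝ) * stdGaussian n w) := by
        rw [landauA_apply_self, ← integral_const_mul]
        exact integral_mono hintegrable (hint.const_mul _) hpointwise
    _ ≤ 2 * (1 + offAxisSq i v) * (C * japaneseBracket v ^ γ) := by gcongr
    _ = _ := by ring

lemma exists_le_norm_sub_rpow_mul_offAxisSq_mul_stdGaussian [Nontrivial (Fin n)] (γ : ℝ) :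
    ∃ c, 0 < c ∧ ∀ (v : EuclideanSpace ℝ (Fin n)) (i : Fin n),
      ∀ w ∈ Metric.ball (oppositeCorner v) 1,
        c * (japaneseBracket v ^ γ * (1 + offAxisSq i v)) ≤
          ‖v - w‖ ^ γ * offAxisSq i (v - w) * stdGaussian n w := by
  set R : ℝ := √(4 * Fintype.card (Fin n))
  obtain ⟨x, hx⟩ : ∃ x : EuclideanSpace ℝ (Fin n), ‖x‖ = R + 1 := exists_norm_eq _ (by positivity)
  refine ⟨((R + 2) ^ |γ|)⁻¹ * stdGaussian n x, mul_pos (by positivity) (stdGaussian_pos x),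
    fun v i w hw => ?_⟩
  have hnorm : ((R + 2) ^ |γ|)⁻¹ * japaneseBracket v ^ γ ≤ ‖v - w‖ ^ γ :=
    (inv_mul_le_iff₀ (by positivity)).2 (japaneseBracket_rpow_le_of_mem_ball_oppositeCorner hw γ)
  have hoff : 1 + offAxisSq i v ≤ offAxisSq i (v - w) :=
    one_add_offAxisSq_le (sq_add_one_le_sq_sub_apply hw) i
  have hgauss : stdGaussian n x ≤ stdGaussian n w :=
    stdGaussian_anti (hx ▸ norm_le_of_mem_ball_oppositeCorner hw)
  have hgauss_nonneg := (stdGaussian_pos x).le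
  have hv := offAxisSq_nonneg i v
  have hvw := offAxisSq_nonneg i (v - w)
  calc ((R + 2) ^ |γ|)⁻¹ * stdGaussian n x * (japaneseBracket v ^ γ * (1 + offAxisSq i v))
      = ((R + 2) ^ |γ|)⁻¹ * japaneseBracket v ^ γ * (1 + offAxisSq i v) * stdGaussian n x := by
        ring
    _ ≤ _ := by gcongr

theorem exists_landauA_apply_self_bounds [Nontrivial (Fin n)] {γ : ℝ} (hγ : -(n : ℝ) < γ) :
    ∃ c₁ c₂, 0 < c₁ ∧ 0 < c₂ ∧ ∀ (v : EuclideanSpace ℝ (Fin n)) (i : Fin n),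
      c₁ * (japaneseBracket v ^ γ * (1 + offAxisSq i v)) ≤ landauA n γ v i i ∧
      landauA n γ v i i ≤ c₂ * (japaneseBracket v ^ γ * (1 + offAxisSq i v)) := by
  have : NeZero n := ⟨fun h => not_subsingleton (Fin n) (h ▸ inferInstance)⟩
  obtain ⟨C, hC, hupper⟩ := exists_landauA_apply_self_le hγ
  obtain ⟨c, hc, hlower⟩ :=
    exists_le_norm_sub_rpow_mul_offAxisSq_mul_stdGaussian (n := n) γ
  set V := volume.real (Metric.ball (0 : EuclideanSpace ℝ (Fin n)) 1) with hV
  have hVpos : 0 < V :=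
    ENNReal.toReal_pos (Metric.measure_ball_pos _ _ one_pos).ne' measure_ball_lt_top.ne
  refine ⟨c * V, C, by positivity, hC, fun v i => ⟨?_, (hupper v i).2⟩⟩
  have hint := (hupper v i).1
  calc c * V * (japaneseBracket v ^ γ * (1 + offAxisSq i v))
      = c * (japaneseBracket v ^ γ * (1 + offAxisSq i v)) *
          volume.real (Metric.ball (oppositeCorner v) 1) := by
        rw [hV, ← Measure.addHaar_real_ball_center volume (oppositeCorner v)]; ring
    _ ≤ ∫ w in Metric.ball (oppositeCorner v) 1,
          ‖v - w‖ ^ γ * offAxisSq i (v - w) * stdGaussian n w :=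
        setIntegral_ge_of_const_le_real measurableSet_ball measure_ball_lt_top.ne (hlower v i)
          hint.integrableOn
    _ ≤ landauA n γ v i i := by
        rw [landauA_apply_self]
        exact setIntegral_le_integral hint
          (.of_forall (norm_sub_rpow_mul_offAxisSq_mul_stdGaussian_nonneg γ i v))

end DiagonalBounds

/-- For `v = r e_d`, `r > 0`, the Landau diffusion matrix `A(r e_d)` is diagonal, its first
`d-1` diagonal entries coincide and are comparable to `⟨r⟩^{γ+2}`, and the last diagonal
entry is comparable to `⟨r⟩^γ` (here the ambient dimension is `d+1 ≥ 2`). -/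
theorem stmt7 (d : ℕ) (hd : 1 ≤ d) (γ : ℝ) (hγ : -((d:ℝ) + 1) < γ) :
    ∃ c₁ c₂ : ℝ, 0 < c₁ ∧ 0 < c₂ ∧ ∀ r : ℝ, 0 < r →
      (∀ i j : Fin (d+1), i ≠ j →
          landauA (d+1) γ (r • EuclideanSpace.single (Fin.last d) 1) i j = 0) ∧
      (∀ i j : Fin (d+1), i ≠ Fin.last d → j ≠ Fin.last d →
          landauA (d+1) γ (r • EuclideanSpace.single (Fin.last d) 1) i i =
            landauA (d+1) γ (r • EuclideanSpace.single (Fin.last d) 1) j j) ∧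
      (∀ i : Fin (d+1), i ≠ Fin.last d →
          c₁ * Real.sqrt (1 + r ^ 2) ^ (γ + 2) ≤
              landauA (d+1) γ (r • EuclideanSpace.single (Fin.last d) 1) i i ∧
            landauA (d+1) γ (r • EuclideanSpace.single (Fin.last d) 1) i i ≤
              c₂ * Real.sqrt (1 + r ^ 2) ^ (γ + 2)) ∧
      (c₁ * Real.sqrt (1 + r ^ 2) ^ γ ≤
          landauA (d+1) γ (r • EuclideanSpace.single (Fin.last d) 1)
            (Fin.last d) (Fin.last d) ∧
        landauA (d+1) γ (r • EuclideanSpace.single (Fin.last d) 1)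
            (Fin.last d) (Fin.last d) ≤
          c₂ * Real.sqrt (1 + r ^ 2) ^ γ) := by
  have : Nontrivial (Fin (d + 1)) := Fin.nontrivial_iff_two_le.2 (by omega)
  obtain ⟨c₁, c₂, hc₁, hc₂, hbounds⟩ :=
    exists_landauA_apply_self_bounds (n := d + 1) (γ := γ) (mod_cast hγ)
  refine ⟨c₁, c₂, hc₁, hc₂, fun r _ => ?_⟩
  set v : EuclideanSpace ℝ (Fin (d + 1)) := r • EuclideanSpace.single (Fin.last d) 1 with hv
  have hzero (i : Fin (d + 1)) (hi : i ≠ Fin.last d) : v i = 0 := by simp [hv, hi]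
  have hbracket : √(1 + r ^ 2) = japaneseBracket v := by simp [hv, japaneseBracket, norm_smul]
  rw [hbracket]
  refine ⟨fun i j hij => ?_, fun i j hi hj => ?_, fun i hi => ?_, ?_⟩
  · by_cases hi : i = Fin.last d
    · rw [landauA_comm, landauA_apply_eq_zero γ hij.symm (hzero j (hi ▸ hij.symm))]
    · exact landauA_apply_eq_zero γ hij (hzero i hi)
  · exact landauA_apply_self_eq γ ((hzero i hi).trans (hzero j hj).symm)
  · simpa only [one_add_offAxisSq_of_apply_eq_zero (hzero i hi), ← rpow_two,
      ← rpow_add (japaneseBracket_pos v)] using hbounds v i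
  · simpa only [hv, offAxisSq_smul_single, add_zero, mul_one] using hbounds v (Fin.last d)
end

section
/- Let d ≥ 1, κ ∈ [0,d) and ρ ∈ (0, 1/2). Define 𝔠̃(a, ρ) = ∫₀^∞ exp(-(r-a)²/2) · r^{d-κ-1} · min{1, ρ²/r²} · (ra+1)^{-(d-2)/2} dr for a ≥ 0. Then 𝔠̃(a, ρ) ≤ C · ρ^{min{1, d-κ}} · (1+a)^{1-κ}, where C depends only on d and κ. -/
open MeasureTheory Real Set

/-!
Up to powers of `1 + |r - a|`, which the Gaussian absorbs, `max 1 r` is comparable to `1 + a` and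
`r * a + 1` is comparable to `(1 + a) ^ 2`, uniformly in `r, a ≥ 0`. Hence the weights
`(max 1 r) ^ (d - κ - 1)` and `(r * a + 1) ^ (-(d - 2) / 2)` together contribute
`(1 + a) ^ (1 - κ)`. Let `0 < m < 2` and `m ≤ d - κ`. Once `(max 1 r) ^ (d - κ - 1)` is split off,
the rest of the integrand is at most `ρ ^ m` times a Gaussian for `r ≥ 1`, because
`min 1 (x ^ 2) ≤ x ^ m`, and at most `r ^ (m - 1) * min 1 (ρ ^ 2 / r ^ 2)` for `r ≤ 1`; by
homogeneity the integral of the latter over `(0, ∞)` is a multiple of `ρ ^ m`.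
-/

section Comparison

variable {a r : ℝ}

lemma rpow_le_rpow_abs_mul_rpow_s14 {x y M : ℝ} (hx : 0 < x) (hy : 0 < y) (hxy : x ≤ M * y)
    (hyx : y ≤ M * x) (e : ℝ) : x ^ e ≤ M ^ |e| * y ^ e := by
  have hM : 0 < M := pos_of_mul_pos_left (hx.trans_le hxy) hy.le
  rcases le_total 0 e with he | he
  · rw [abs_of_nonneg he, ← mul_rpow hM.le hy.le]
    exact rpow_le_rpow hx.le hxy he
  · calc x ^ e ≤ (y / M) ^ e :=
          rpow_le_rpow_of_nonpos (by positivity) ((div_le_iff₀' hM).2 hyx) he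
      _ = M ^ |e| * y ^ e := by
          rw [abs_of_nonpos he, div_rpow hy.le hM.le, rpow_neg hM.le, div_eq_inv_mul]

lemma max_one_rpow_le (ha : 0 ≤ a) (q : ℝ) :
    max 1 r ^ q ≤ (2 * (1 + |r - a|)) ^ |q| * (1 + a) ^ q := by
  have ht : 0 ≤ |r - a| := abs_nonneg _
  refine rpow_le_rpow_abs_mul_rpow_s14 (by positivity) (by positivity) (max_le ?_ ?_) ?_ q
  · nlinarith
  · nlinarith [le_abs_self (r - a)]
  · nlinarith [le_max_left 1 r, le_max_right 1 r, neg_abs_le (r - a)]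

lemma mul_add_one_rpow_le (hr : 0 ≤ r) (ha : 0 ≤ a) (e : ℝ) :
    (r * a + 1) ^ e ≤ (2 * (1 + |r - a|)) ^ (2 * |e|) * (1 + a) ^ (2 * e) := by
  have ht : 0 ≤ |r - a| := abs_nonneg _
  have hra : 0 ≤ r * a := mul_nonneg hr ha
  have upper : r * a + 1 ≤ (2 * (1 + |r - a|)) ^ 2 * (1 + a) ^ 2 := by
    have : r * a ≤ (a + |r - a|) * a := by gcongr; linarith [le_abs_self (r - a)]
    rw [← mul_pow]
    nlinarith [mul_nonneg ht ha]
  have lower : (1 + a) ^ 2 ≤ (2 * (1 + |r - a|)) ^ 2 * (r * a + 1) := by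
    have : a ^ 2 ≤ 2 * (r * a) + |r - a| ^ 2 := by rw [sq_abs]; nlinarith [sq_nonneg r]
    nlinarith [sq_nonneg (a - 1), mul_nonneg hra ht, mul_nonneg hra (sq_nonneg |r - a|)]
  have h := rpow_le_rpow_abs_mul_rpow_s14 (by positivity) (by positivity) upper lower e
  rwa [← rpow_natCast_mul (by positivity), ← rpow_natCast_mul (by positivity),
    Nat.cast_ofNat] at h

end Comparison

lemma one_add_rpow_le_exp_mul_exp {N t c : ℝ} (hN : 0 ≤ N) (ht : -1 ≤ t) (hc : 0 < c) :
    (1 + t) ^ N ≤ exp (N ^ 2 / (4 * c)) * exp (c * t ^ 2) := by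
  have young : t * N ≤ N ^ 2 / (4 * c) + c * t ^ 2 := by
    have gap_eq : N ^ 2 / (4 * c) + c * t ^ 2 - t * N = (N - 2 * c * t) ^ 2 / (4 * c) := by
      field_simp; ring
    have gap_nonneg : 0 ≤ (N - 2 * c * t) ^ 2 / (4 * c) := by positivity
    linarith
  calc (1 + t) ^ N ≤ exp t ^ N :=
        rpow_le_rpow (by linarith) (by linarith [add_one_le_exp t]) hN
    _ = exp (t * N) := (exp_mul t N).symm
    _ ≤ exp (N ^ 2 / (4 * c) + c * t ^ 2) := exp_le_exp.2 young
    _ = exp (N ^ 2 / (4 * c)) * exp (c * t ^ 2) := exp_add _ _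

lemma exists_exp_mul_max_one_rpow_mul_rpow_le (q e : ℝ) :
    ∃ C : ℝ, 0 < C ∧ ∀ r a : ℝ, 0 ≤ r → 0 ≤ a →
      exp (-(r - a) ^ 2 / 2) * max 1 r ^ q * (r * a + 1) ^ e ≤
        C * exp (-(1 / 4) * (r - a) ^ 2) * (1 + a) ^ (q + 2 * e) := by
  set N := |q| + 2 * |e|
  set A := exp (N ^ 2 / (4 * (1 / 4)))
  refine ⟨2 ^ N * A, by positivity, fun r a hr ha => ?_⟩
  set t := |r - a|
  have absorb : (2 * (1 + t)) ^ N ≤ 2 ^ N * (A * exp (1 / 4 * t ^ 2)) := by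
    rw [mul_rpow zero_le_two (by positivity)]
    gcongr
    exact one_add_rpow_le_exp_mul_exp (by positivity) (by linarith [abs_nonneg (r - a)])
      (by norm_num)
  calc exp (-(r - a) ^ 2 / 2) * max 1 r ^ q * (r * a + 1) ^ e
      ≤ exp (-(r - a) ^ 2 / 2) * ((2 * (1 + t)) ^ |q| * (1 + a) ^ q) *
          ((2 * (1 + t)) ^ (2 * |e|) * (1 + a) ^ (2 * e)) := by
        gcongr
        · exact max_one_rpow_le ha q
        · exact mul_add_one_rpow_le hr ha e
    _ = exp (-(r - a) ^ 2 / 2) * (2 * (1 + t)) ^ N * (1 + a) ^ (q + 2 * e) := by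
        rw [rpow_add (by positivity), rpow_add (by positivity)]; ring
    _ ≤ exp (-(r - a) ^ 2 / 2) * (2 ^ N * (A * exp (1 / 4 * t ^ 2))) *
          (1 + a) ^ (q + 2 * e) := by gcongr
    _ = 2 ^ N * A * exp (-(1 / 4) * (r - a) ^ 2) * (1 + a) ^ (q + 2 * e) := by
        rw [show -(1 / 4) * (r - a) ^ 2 = -(r - a) ^ 2 / 2 + 1 / 4 * t ^ 2 by
          rw [sq_abs]; ring, exp_add]
        ring

section TruncatedPower

variable {m ρ : ℝ}

lemma min_one_sq_le_rpow {x : ℝ} (hx : 0 < x) (hm0 : 0 ≤ m) (hm2 : m ≤ 2) :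
    min 1 (x ^ 2) ≤ x ^ m := by
  rcases le_total x 1 with h | h
  · refine (min_le_right _ _).trans ?_
    rw [← rpow_two]
    exact rpow_le_rpow_of_exponent_ge hx h hm2
  · exact (min_le_left _ _).trans (one_le_rpow h hm0)

lemma rpow_mul_min_one_le {p r : ℝ} (hm0 : 0 ≤ m) (hm2 : m ≤ 2) (hmp : m ≤ p) (hρ : 0 < ρ)
    (hr : 0 < r) :
    r ^ (p - 1) * min 1 (ρ ^ 2 / r ^ 2) ≤
      max 1 r ^ (p - 1) * (ρ ^ m + r ^ (m - 1) * min 1 (ρ ^ 2 / r ^ 2)) := by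
  rcases le_total r 1 with h | h
  · rw [max_eq_left h, one_rpow, one_mul]
    calc r ^ (p - 1) * min 1 (ρ ^ 2 / r ^ 2) ≤ r ^ (m - 1) * min 1 (ρ ^ 2 / r ^ 2) := by
          gcongr ?_ * _
          exact rpow_le_rpow_of_exponent_ge hr h (by linarith)
      _ ≤ ρ ^ m + r ^ (m - 1) * min 1 (ρ ^ 2 / r ^ 2) := le_add_of_nonneg_left (by positivity)
  · rw [max_eq_right h]
    gcongr
    calc min 1 (ρ ^ 2 / r ^ 2) ≤ min 1 (ρ ^ 2) :=
          min_le_min_left 1 (div_le_self (sq_nonneg ρ) (one_le_pow₀ h))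
      _ ≤ ρ ^ m := min_one_sq_le_rpow hρ hm0 hm2
      _ ≤ ρ ^ m + r ^ (m - 1) * min 1 (ρ ^ 2 / r ^ 2) := le_add_of_nonneg_right (by positivity)

lemma rpow_mul_min_one_eqOn_Ioc :
    EqOn (fun r : ℝ => r ^ (m - 1) * min 1 (ρ ^ 2 / r ^ 2)) (fun r => r ^ (m - 1))
      (Ioc 0 ρ) := by
  rintro r ⟨hr, hrρ⟩
  have : 1 ≤ ρ ^ 2 / r ^ 2 := (one_le_div₀ (by positivity)).2 (by gcongr)
  simp only [min_eq_left this, mul_one]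

lemma rpow_mul_min_one_eqOn_Ioi (hρ : 0 ≤ ρ) :
    EqOn (fun r : ℝ => r ^ (m - 1) * min 1 (ρ ^ 2 / r ^ 2)) (fun r => ρ ^ 2 * r ^ (m - 3))
      (Ioi ρ) := by
  intro r (hr : ρ < r)
  have hr0 : 0 < r := hρ.trans_lt hr
  have : ρ ^ 2 / r ^ 2 ≤ 1 := (div_le_one₀ (by positivity)).2 (by gcongr)
  simp only [min_eq_right this]
  rw [show m - 3 = m - 1 - 2 by ring, rpow_sub hr0 (m - 1) 2, rpow_two]
  ring

lemma integrableOn_Ioc_rpow_mul_min_one (hm : 0 < m) (hρ : 0 ≤ ρ) :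
    IntegrableOn (fun r : ℝ => r ^ (m - 1) * min 1 (ρ ^ 2 / r ^ 2)) (Ioc 0 ρ) := by
  rw [integrableOn_congr_fun rpow_mul_min_one_eqOn_Ioc measurableSet_Ioc,
    ← intervalIntegrable_iff_integrableOn_Ioc_of_le hρ]
  exact intervalIntegral.intervalIntegrable_rpow' (by linarith)

lemma integrableOn_Ioi_self_rpow_mul_min_one (hm : m < 2) (hρ : 0 < ρ) :
    IntegrableOn (fun r : ℝ => r ^ (m - 1) * min 1 (ρ ^ 2 / r ^ 2)) (Ioi ρ) := by
  rw [integrableOn_congr_fun (rpow_mul_min_one_eqOn_Ioi hρ.le) measurableSet_Ioi]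
  exact (integrableOn_Ioi_rpow_of_lt (by linarith) hρ).const_mul _

lemma integrableOn_Ioi_zero_rpow_mul_min_one (hm0 : 0 < m) (hm2 : m < 2) (hρ : 0 < ρ) :
    IntegrableOn (fun r : ℝ => r ^ (m - 1) * min 1 (ρ ^ 2 / r ^ 2)) (Ioi 0) := by
  rw [← Ioc_union_Ioi_eq_Ioi hρ.le]
  exact (integrableOn_Ioc_rpow_mul_min_one hm0 hρ.le).union
    (integrableOn_Ioi_self_rpow_mul_min_one hm2 hρ)

lemma integral_Ioi_rpow_mul_min_one (hm0 : 0 < m) (hm2 : m < 2) (hρ : 0 < ρ) :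
    ∫ r in Ioi (0 : ℝ), r ^ (m - 1) * min 1 (ρ ^ 2 / r ^ 2) =
      (1 / m + 1 / (2 - m)) * ρ ^ m := by
  have inner : ∫ r in Ioc 0 ρ, r ^ (m - 1) * min 1 (ρ ^ 2 / r ^ 2) = ρ ^ m / m := by
    rw [setIntegral_congr_fun measurableSet_Ioc rpow_mul_min_one_eqOn_Ioc,
      ← intervalIntegral.integral_of_le hρ.le, integral_rpow (Or.inl (by linarith)),
      sub_add_cancel, zero_rpow hm0.ne', sub_zero]
  have outer : ∫ r in Ioi ρ, r ^ (m - 1) * min 1 (ρ ^ 2 / r ^ 2) = ρ ^ m / (2 - m) := by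
    rw [setIntegral_congr_fun measurableSet_Ioi (rpow_mul_min_one_eqOn_Ioi hρ.le),
      integral_const_mul, integral_Ioi_rpow_of_lt (by linarith) hρ,
      show m - 3 + 1 = m - 2 by ring, rpow_sub hρ, rpow_two, neg_div, ← div_neg, neg_sub]
    field_simp
  rw [← Ioc_union_Ioi_eq_Ioi hρ.le,
    setIntegral_union (Ioc_disjoint_Ioi le_rfl) measurableSet_Ioi
      (integrableOn_Ioc_rpow_mul_min_one hm0 hρ.le)
      (integrableOn_Ioi_self_rpow_mul_min_one hm2 hρ), inner, outer]
  ring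

end TruncatedPower

lemma integrable_exp_neg_mul_sub_sq {b : ℝ} (hb : 0 < b) (a : ℝ) :
    Integrable fun r : ℝ => exp (-b * (r - a) ^ 2) :=
  (integrable_exp_neg_mul_sq hb).comp_sub_right a

lemma setIntegral_exp_neg_mul_sub_sq_le {b : ℝ} (hb : 0 < b) (a : ℝ) (s : Set ℝ) :
    ∫ r in s, exp (-b * (r - a) ^ 2) ≤ √(π / b) :=
  calc ∫ r in s, exp (-b * (r - a) ^ 2) ≤ ∫ r : ℝ, exp (-b * (r - a) ^ 2) :=
        setIntegral_le_integral (integrable_exp_neg_mul_sub_sq hb a)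
          (Filter.Eventually.of_forall fun _ => (exp_pos _).le)
    _ = √(π / b) := by
        rw [integral_sub_right_eq_self fun r : ℝ => exp (-b * r ^ 2), integral_gaussian]

lemma exists_carleman_integrand_le {d κ m : ℝ} (hm0 : 0 ≤ m) (hm2 : m ≤ 2) (hmd : m ≤ d - κ) :
    ∃ C : ℝ, 0 < C ∧ ∀ ρ r a : ℝ, 0 < ρ → 0 < r → 0 ≤ a →
      exp (-(r - a) ^ 2 / 2) * r ^ (d - κ - 1) * min 1 (ρ ^ 2 / r ^ 2) *
          (r * a + 1) ^ (-(d - 2) / 2) ≤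
        C * (1 + a) ^ (1 - κ) * (ρ ^ m * exp (-(1 / 4) * (r - a) ^ 2) +
          r ^ (m - 1) * min 1 (ρ ^ 2 / r ^ 2)) := by
  obtain ⟨C, hC, weight_le⟩ :=
    exists_exp_mul_max_one_rpow_mul_rpow_le (d - κ - 1) (-(d - 2) / 2)
  rw [show d - κ - 1 + 2 * (-(d - 2) / 2) = 1 - κ by ring] at weight_le
  refine ⟨C, hC, fun ρ r a hρ hr ha => ?_⟩
  set T := r ^ (m - 1) * min 1 (ρ ^ 2 / r ^ 2)
  calc exp (-(r - a) ^ 2 / 2) * r ^ (d - κ - 1) * min 1 (ρ ^ 2 / r ^ 2) *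
        (r * a + 1) ^ (-(d - 2) / 2)
      = exp (-(r - a) ^ 2 / 2) * (r * a + 1) ^ (-(d - 2) / 2) *
          (r ^ (d - κ - 1) * min 1 (ρ ^ 2 / r ^ 2)) := by ring
    _ ≤ exp (-(r - a) ^ 2 / 2) * (r * a + 1) ^ (-(d - 2) / 2) *
          (max 1 r ^ (d - κ - 1) * (ρ ^ m + T)) := by
        gcongr ?_ * ?_
        exact rpow_mul_min_one_le hm0 hm2 hmd hρ hr
    _ = exp (-(r - a) ^ 2 / 2) * max 1 r ^ (d - κ - 1) * (r * a + 1) ^ (-(d - 2) / 2) *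
          (ρ ^ m + T) := by ring
    _ ≤ C * exp (-(1 / 4) * (r - a) ^ 2) * (1 + a) ^ (1 - κ) * (ρ ^ m + T) := by
        gcongr ?_ * _
        exact weight_le r a hr.le ha
    _ = C * (1 + a) ^ (1 - κ) * (ρ ^ m * exp (-(1 / 4) * (r - a) ^ 2) +
          exp (-(1 / 4) * (r - a) ^ 2) * T) := by ring
    _ ≤ C * (1 + a) ^ (1 - κ) * (ρ ^ m * exp (-(1 / 4) * (r - a) ^ 2) + T) := by
        gcongr
        exact mul_le_of_le_one_left (by positivity) (exp_le_one_iff.2 (by nlinarith))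

theorem stmt14_general {d κ m : ℝ} (hm0 : 0 < m) (hm2 : m < 2) (hmd : m ≤ d - κ) :
    ∃ C : ℝ, 0 < C ∧ ∀ ρ : ℝ, 0 < ρ → ∀ a : ℝ, 0 ≤ a →
      (∫ r in Ioi (0 : ℝ),
          exp (-(r - a) ^ 2 / 2) * r ^ (d - κ - 1) * min 1 (ρ ^ 2 / r ^ 2) *
            (r * a + 1) ^ (-(d - 2) / 2)) ≤
        C * ρ ^ m * (1 + a) ^ (1 - κ) := by
  obtain ⟨C, hC, integrand_le⟩ := exists_carleman_integrand_le hm0.le hm2.le hmd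
  have : 0 < 2 - m := sub_pos.2 hm2
  refine ⟨C * (√(π / (1 / 4)) + (1 / m + 1 / (2 - m))), by positivity, fun ρ hρ a ha => ?_⟩
  set T : ℝ → ℝ := fun r => r ^ (m - 1) * min 1 (ρ ^ 2 / r ^ 2)
  set G : ℝ → ℝ := fun r => exp (-(1 / 4) * (r - a) ^ 2)
  have hT : IntegrableOn T (Ioi 0) := integrableOn_Ioi_zero_rpow_mul_min_one hm0 hm2 hρ
  have hG : IntegrableOn (fun r => ρ ^ m * G r) (Ioi 0) :=
    ((integrable_exp_neg_mul_sub_sq (by norm_num) a).const_mul _).integrableOn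
  calc _ ≤ ∫ r in Ioi (0 : ℝ), C * (1 + a) ^ (1 - κ) * (ρ ^ m * G r + T r) := by
        refine integral_mono_of_nonneg ?_ ((hG.add hT).const_mul _) ?_ <;>
          filter_upwards [ae_restrict_mem measurableSet_Ioi] with r (hr : 0 < r)
        · simp only [Pi.zero_apply]; positivity
        · exact integrand_le ρ r a hρ hr ha
    _ = C * (1 + a) ^ (1 - κ) *
          (ρ ^ m * (∫ r in Ioi (0 : ℝ), G r) + (1 / m + 1 / (2 - m)) * ρ ^ m) := by
        rw [integral_const_mul, integral_add hG hT, integral_const_mul,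
          integral_Ioi_rpow_mul_min_one hm0 hm2 hρ]
    _ ≤ C * (1 + a) ^ (1 - κ) *
          (ρ ^ m * √(π / (1 / 4)) + (1 / m + 1 / (2 - m)) * ρ ^ m) := by
        gcongr
        exact setIntegral_exp_neg_mul_sub_sq_le (by norm_num) a _
    _ = C * (√(π / (1 / 4)) + (1 / m + 1 / (2 - m))) * ρ ^ m * (1 + a) ^ (1 - κ) := by ring

/-- Upper bound `𝔠̃(a,ρ) ≤ C ρ^{min{1,d-κ}} (1+a)^{1-κ}` for the small-scale error of the
Carleman coefficient. -/
theorem stmt14 (d : ℕ) (hd : 1 ≤ d) (κ : ℝ) (hκ0 : 0 ≤ κ) (hκd : κ < d) :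
    ∃ C : ℝ, 0 < C ∧ ∀ ρ ∈ Set.Ioo (0:ℝ) (1/2), ∀ a : ℝ, 0 ≤ a →
      (∫ r in Set.Ioi (0:ℝ),
          Real.exp (-(r - a) ^ 2 / 2) * r ^ ((d:ℝ) - κ - 1) * min 1 (ρ ^ 2 / r ^ 2) *
            (r * a + 1) ^ (-((d:ℝ) - 2) / 2)) ≤
        C * ρ ^ (min 1 ((d:ℝ) - κ)) * (1 + a) ^ (1 - κ) := by
  obtain ⟨C, hC, h⟩ := stmt14_general (d := d) (κ := κ) (lt_min one_pos (sub_pos.2 hκd))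
    ((min_le_left _ _).trans_lt one_lt_two) (min_le_right _ _)
  exact ⟨C, hC, fun ρ hρ => h ρ hρ.1⟩
end
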